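/- Let M be a smooth manifold, Φ ∈ End(TM) with Id + Φ invertible, and suppose Φ corresponds to a direct sum decomposition TM = ξ ⊕ ζ via Φ = 0 on ξ, Φ = Id on ζ with both ξ and ζ integrable. Then the deformed differential d_Φ = R_Φ d R_Φ^{-1} (where R_Φ = Id + Φ acts on forms slotwise) satisfies [d, d_Φ] = 0, where [·,·] is the graded commutator of degree-1 derivations, i.e. d d_Φ + d_Φ d = 0. -/

import Mathlib

namespace Stmt19

open scoped BigOperators

variable {A : Type*} [CommRing A] [Algebra ℝ A]

/-- Degree-`p` forms, modelled as `A`-valued maps on `p`-tuples of vector fields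
(derivations of the function algebra `A`); alternation and `A`-multilinearity
are imposed as hypotheses in the theorem. -/
abbrev Form (A : Type*) [CommRing A] [Algebra ℝ A] (p : ℕ) :=
  (Fin p → Derivation ℝ A A) → A

/-- The exterior derivative on forms, given by the global Koszul formula. -/
def koszulD {p : ℕ} (σ : Form A p) : Form A (p + 1) := fun v =>
  (∑ i : Fin (p + 1), ((-1 : ℤ) ^ (i : ℕ)) • (v i) (σ (v ∘ i.succAbove)))
    + ∑ j : Fin (p + 1), ∑ i : Fin (p + 1),
        if h : (i : ℕ) < (j : ℕ) then
          ((-1 : ℤ) ^ (j : ℕ)) •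
            σ (Function.update (v ∘ j.succAbove)
                ⟨(i : ℕ), lt_of_lt_of_le h (Nat.lt_succ_iff.mp j.isLt)⟩
                ⁅v i, v j⁆)
        else 0

/-- The slotwise action of a map `T : TM → TM` on forms:
`(Tσ)(V₁,…,V_p) = σ(TV₁,…,TV_p)`. -/
def slotwise {p : ℕ} (T : Derivation ℝ A A → Derivation ℝ A A)
    (σ : Form A p) : Form A p :=
  fun v => σ fun k => T (v k)

/-- Alternating real-multilinear cochains on derivations. -/
abbrev Alt (A : Type*) [CommRing A] [Algebra ℝ A] (p : ℕ) :=
  Derivation ℝ A A [⋀^Fin p]→ₗ[ℝ] A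

/-- Uncurrying a linear family of alternating maps. -/
def uncurryAlt {n : ℕ} (f : Derivation ℝ A A →ₗ[ℝ] Alt A n)
    (h : ∀ X v k, v k = X → f X v = 0) : Alt A (n + 1) where
  toFun v := f (v 0) (Fin.tail v)
  map_update_add' := by
    intro inst m i x y
    rw [Subsingleton.elim inst (instDecidableEqFin _)]
    cases i using Fin.cases <;> simp [Ne.symm]
  map_update_smul' := by
    intro inst m i c x
    rw [Subsingleton.elim inst (instDecidableEqFin _)]
    cases i using Fin.cases <;> simp [Ne.symm]
  map_eq_zero_of_eq' := by
    intro v i j hv hij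
    cases i using Fin.cases with
    | zero =>
      cases j using Fin.cases with
      | zero => exact absurd rfl hij
      | succ j => exact h _ _ j hv.symm
    | succ i =>
      cases j using Fin.cases with
      | zero => exact h _ _ i hv
      | succ j =>
        exact (f (v 0)).map_eq_zero_of_eq (Fin.tail v) hv (fun e => hij (by rw [e]))

/-- It is enough to check the condition on the first slot. -/
lemma curry_cond {n : ℕ} (g : Alt A (n + 1)) (X : Derivation ℝ A A)
    (h : g.curryLeft X = 0) (v : Fin (n + 1) → Derivation ℝ A A) (k : Fin (n + 1))
    (hk : v k = X) : g v = 0 := by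
  have h1 := Fin.insertNth_self_removeNth k v
  rw [← h1, AlternatingMap.map_insertNth, ← AlternatingMap.curryLeft_apply_apply, hk, h]
  simp

/-- Raw Lie derivative. -/
def lieD {p : ℕ} (X : Derivation ℝ A A) (σ : Form A p) : Form A p := fun v =>
  X (σ v) - ∑ k, σ (Function.update v k ⁅X, v k⁆)

lemma lieD_cons {n : ℕ} (X Y : Derivation ℝ A A) (σ : Alt A (n + 1))
    (v : Fin n → Derivation ℝ A A) :
    lieD X σ (Fin.cons Y v) =
      lieD X (σ.curryLeft Y) v - σ.curryLeft ⁅X, Y⁆ v := by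
  simp only [lieD, Fin.sum_univ_succ, AlternatingMap.curryLeft_apply_apply, Fin.cons_zero,
    Fin.cons_succ, Fin.update_cons_zero, ← Fin.cons_update, Matrix.vecCons]
  ring

lemma lie_linear_of_key (n : ℕ)
    (key : ∀ (X : Derivation ℝ A A) (σ : Alt A n), ∃ τ : Alt A n, ∀ v, τ v = lieD X σ v) :
    ∃ L : Derivation ℝ A A →ₗ[ℝ] Alt A n →ₗ[ℝ] Alt A n,
    ∀ X σ v, L X σ v = lieD X σ v := by
  choose τ hτ using key
  refine ⟨LinearMap.mk₂ ℝ τ ?_ ?_ ?_ ?_, fun X σ v => hτ X σ v⟩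
  · intro X Y σ
    ext v
    simp [hτ, lieD, Finset.sum_add_distrib]
    ring
  · intro c X σ
    ext v
    simp [hτ, lieD, Finset.smul_sum, smul_sub]
  · intro X σ σ'
    ext v
    simp [hτ, lieD, Finset.sum_add_distrib]
    ring
  · intro c X σ
    ext v
    simp [hτ, lieD, Finset.smul_sum, smul_sub]

lemma exists_lie (n : ℕ) : ∃ L : Derivation ℝ A A →ₗ[ℝ] Alt A n →ₗ[ℝ] Alt A n,
    ∀ X σ v, L X σ v = lieD X σ v := by
  have key : ∀ (X : Derivation ℝ A A) (σ : Alt A n), ∃ τ : Alt A n, ∀ v, τ v = lieD X σ v := by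
    induction n with
    | zero =>
      intro X σ
      refine ⟨(X : A →ₗ[ℝ] A).compAlternatingMap σ, fun v => ?_⟩
      simp [lieD]
    | succ n ih =>
      intro X σ
      obtain ⟨L, hL⟩ := lie_linear_of_key n ih
      refine ⟨uncurryAlt ((L X).comp σ.curryLeft -
        σ.curryLeft.comp (LieAlgebra.ad ℝ (Derivation ℝ A A) X)) ?_, ?_⟩
      · intro Y v k hk
        cases n with
        | zero => exact k.elim0
        | succ m =>
          refine curry_cond _ Y ?_ v k hk
          ext w
          have e1 := lieD_cons X Y (σ.curryLeft Y) w
          have e2 : lieD X ((0 : Alt A m) : Form A m) w = 0 := by simp [lieD]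
          rw [AlternatingMap.curryLeft_same, e2] at e1
          have e3 : σ.curryLeft Y (Fin.cons ⁅X, Y⁆ w) = - σ.curryLeft ⁅X, Y⁆ (Fin.cons Y w) := by
            have h := AlternatingMap.curryLeft_same σ (Y + ⁅X, Y⁆)
            have h := congrArg (fun t => t w) h
            simp only [map_add, AlternatingMap.curryLeft_add, LinearMap.add_apply,
              AlternatingMap.curryLeft_same, AlternatingMap.add_apply, zero_add, add_zero,
              AlternatingMap.zero_apply] at h
            exact eq_neg_of_add_eq_zero_left (by rw [add_comm]; exact h)
          simp only [AlternatingMap.curryLeft_apply_apply, LinearMap.sub_apply,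
            LinearMap.comp_apply, AlternatingMap.sub_apply, hL, LieAlgebra.ad_apply,
            AlternatingMap.zero_apply]
          simp only [Matrix.vecCons, AlternatingMap.curryLeft_apply_apply] at e1 e3 ⊢
          rw [e1, e3]
          ring
      · intro v
        rw [← Fin.cons_self_tail v, lieD_cons]
        simp [uncurryAlt, hL]
  exact lie_linear_of_key n key

lemma cons_succAbove {n : ℕ} (X : Derivation ℝ A A) (v : Fin (n + 1) → Derivation ℝ A A)
    (i : Fin (n + 1)) :
    (Fin.cons X v : Fin (n + 2) → Derivation ℝ A A) ∘ i.succ.succAbove =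
      Fin.cons X (v ∘ i.succAbove) := by
  ext1 k
  cases k using Fin.cases <;> simp

lemma alt_cons {n : ℕ} (σ : Alt A (n + 1)) (Y : Derivation ℝ A A)
    (v : Fin (n + 1) → Derivation ℝ A A) (k : Fin (n + 1)) :
    ((-1 : ℤ) ^ (k : ℕ)) • σ (Fin.cons Y (v ∘ k.succAbove)) = σ (Function.update v k Y) := by
  have h := AlternatingMap.neg_one_pow_smul_map_insertNth σ k Y (k.removeNth v)
  rw [Fin.insertNth_removeNth] at h
  have h2 := AlternatingMap.map_insertNth σ k Y (k.removeNth v)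
  rw [Fin.insertNth_removeNth] at h2
  rw [h2]
  rcases neg_one_pow_eq_or ℤ (k : ℕ) with e | e
  · have e' : ((-1 : ℤ)) ^ (k : ℕ) = 1 := e
    simp only [e']
    rfl
  · simp only [e]
    rfl

lemma koszulD_cons {n : ℕ} (X : Derivation ℝ A A) (σ : Alt A (n + 1))
    (v : Fin (n + 1) → Derivation ℝ A A) :
    koszulD σ (Fin.cons X v) = lieD X σ v - koszulD (σ.curryLeft X) v := by
  have hu : ∀ (i j : Fin (n + 1)) (h : (i : ℕ) < (j : ℕ)) (h' : (i.succ : ℕ) < n + 1) Z,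
      Function.update (Fin.cons X (v ∘ j.succAbove) : Fin (n + 1) → Derivation ℝ A A)
        ⟨(i.succ : ℕ), h'⟩ Z =
      Fin.cons X (Function.update (v ∘ j.succAbove)
        ⟨(i : ℕ), lt_of_lt_of_le h (Nat.lt_succ_iff.mp j.isLt)⟩ Z) := by
    intro i j h h' Z
    rw [Fin.cons_update]
    rfl
  have hz : ∀ (j : Fin (n + 1)) (h' : ((0 : Fin (n + 2)) : ℕ) < n + 1) Z,
      Function.update (Fin.cons X (v ∘ j.succAbove) : Fin (n + 1) → Derivation ℝ A A)
        ⟨((0 : Fin (n + 2)) : ℕ), h'⟩ Z =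
      Fin.cons Z (v ∘ j.succAbove) := by
    intro j h' Z
    exact Fin.update_cons_zero _ _ _
  have e0 : (Fin.cons X v : Fin (n + 2) → Derivation ℝ A A) ∘ Fin.succAbove 0 = v := by
    ext1 k
    simp
  simp only [koszulD, lieD]
  rw [Fin.sum_univ_succ, Fin.sum_univ_succ (n := n + 1)]
  have hj : ∀ j : Fin (n + 1), (∑ i : Fin (n + 2),
        if h : (i : ℕ) < (j.succ : ℕ) then
          ((-1 : ℤ) ^ (j.succ : ℕ)) •
            σ (Function.update ((Fin.cons X v : Fin (n + 2) → Derivation ℝ A A) ∘ j.succ.succAbove)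
                ⟨(i : ℕ), lt_of_lt_of_le h (Nat.lt_succ_iff.mp j.succ.isLt)⟩
                ⁅(Fin.cons X v : Fin (n + 2) → Derivation ℝ A A) i,
                 (Fin.cons X v : Fin (n + 2) → Derivation ℝ A A) j.succ⁆)
        else 0) = - σ (Function.update v j ⁅X, v j⁆) -
        ∑ i : Fin (n + 1), if h : (i : ℕ) < (j : ℕ) then
          ((-1 : ℤ) ^ (j : ℕ)) •
            (σ.curryLeft X) (Function.update (v ∘ j.succAbove)
                ⟨(i : ℕ), lt_of_lt_of_le h (Nat.lt_succ_iff.mp j.isLt)⟩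
                ⁅v i, v j⁆)
        else 0 := by
    intro j
    rw [Fin.sum_univ_succ, sub_eq_add_neg, ← Finset.sum_neg_distrib]
    congr 1
    · rw [dif_pos (by simp)]
      simp only [cons_succAbove, hz, Fin.cons_zero, Fin.cons_succ]
      rw [← alt_cons, Fin.val_succ, pow_succ]
      simp
    · refine Finset.sum_congr rfl fun i _ => ?_
      by_cases h : (i : ℕ) < (j : ℕ)
      · have h1 : (i.succ : ℕ) < (j.succ : ℕ) := by simpa using h
        rw [dif_pos h, dif_pos h1]
        simp only [cons_succAbove, hu i j h, Fin.cons_succ, AlternatingMap.curryLeft_apply_apply,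
          Matrix.vecCons]
        rw [Fin.val_succ, pow_succ]
        simp
      · have h1 : ¬ (i.succ : ℕ) < (j.succ : ℕ) := by simpa using h
        rw [dif_neg h, dif_neg h1, neg_zero]
  rw [Finset.sum_congr rfl (fun j _ => hj j)]
  have hf : ∀ i : Fin (n + 1), ((-1 : ℤ) ^ (i.succ : ℕ)) •
      ((Fin.cons X v : Fin (n + 2) → Derivation ℝ A A) i.succ)
        (σ ((Fin.cons X v : Fin (n + 2) → Derivation ℝ A A) ∘ i.succ.succAbove)) =
      - (((-1 : ℤ) ^ (i : ℕ)) • (v i) (σ.curryLeft X (v ∘ i.succAbove))) := by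
    intro i
    rw [cons_succAbove, Fin.val_succ, pow_succ, Fin.cons_succ,
      AlternatingMap.curryLeft_apply_apply]
    simp [Matrix.vecCons]
  rw [Finset.sum_congr rfl (fun j _ => hf j), e0]
  simp only [Fin.val_zero, pow_zero, one_smul, Fin.cons_zero, Nat.not_lt_zero, dite_false,
    Finset.sum_const_zero, Finset.sum_neg_distrib, Finset.sum_sub_distrib]
  ring

/-- Bundled Lie derivative. -/
noncomputable def lieA (n : ℕ) : Derivation ℝ A A →ₗ[ℝ] Alt A n →ₗ[ℝ] Alt A n :=
  Classical.choose (exists_lie n)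

lemma lieA_apply {n : ℕ} (X : Derivation ℝ A A) (σ : Alt A n) (v) :
    lieA n X σ v = lieD X σ v := Classical.choose_spec (exists_lie n) X σ v

lemma curry_lieA {n : ℕ} (X Y : Derivation ℝ A A) (σ : Alt A (n + 1)) :
    (lieA (n + 1) X σ).curryLeft Y = lieA n X (σ.curryLeft Y) - σ.curryLeft ⁅X, Y⁆ := by
  ext v
  rw [AlternatingMap.curryLeft_apply_apply, lieA_apply, AlternatingMap.sub_apply, lieA_apply]
  exact lieD_cons X Y σ v

lemma koszulD_cons_zero (X : Derivation ℝ A A) (σ : Alt A 0)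
    (v : Fin 0 → Derivation ℝ A A) :
    koszulD σ (Fin.cons X v) = lieD X σ v := by
  simp only [koszulD, lieD, Finset.univ_eq_empty, Finset.sum_empty, sub_zero]
  simp only [Nat.reduceAdd, Finset.univ_unique, Finset.sum_singleton, Fin.default_eq_zero,
    lt_irrefl, dite_false]
  simp

lemma d_linear_of_key (n : ℕ)
    (key : ∀ (σ : Alt A n), ∃ τ : Alt A (n + 1), ∀ v, τ v = koszulD σ v) :
    ∃ D : Alt A n →ₗ[ℝ] Alt A (n + 1), ∀ σ v, D σ v = koszulD σ v := by
  choose τ hτ using key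
  refine ⟨{ toFun := τ, map_add' := ?_, map_smul' := ?_ }, fun σ v => hτ σ v⟩
  · intro σ σ'
    ext v
    simp only [hτ, koszulD, AlternatingMap.add_apply, map_add, smul_add,
      Finset.sum_add_distrib]
    rw [add_add_add_comm]
    congr 1
    simp only [← Finset.sum_add_distrib]
    refine Finset.sum_congr rfl fun j _ => Finset.sum_congr rfl fun i _ => ?_
    split_ifs <;> simp
  · intro c σ
    ext v
    simp only [hτ, koszulD, AlternatingMap.smul_apply, Derivation.map_smul, RingHom.id_apply,
      smul_add, Finset.smul_sum]
    congr 1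
    · refine Finset.sum_congr rfl fun j _ => ?_
      rw [smul_comm]
    · refine Finset.sum_congr rfl fun j _ => Finset.sum_congr rfl fun i _ => ?_
      split_ifs
      · rw [smul_comm]
      · simp

lemma exists_d (n : ℕ) :
    ∃ D : Alt A n →ₗ[ℝ] Alt A (n + 1), ∀ σ v, D σ v = koszulD σ v := by
  have key : ∀ (σ : Alt A n), ∃ τ : Alt A (n + 1), ∀ v, τ v = koszulD σ v := by
    induction n with
    | zero =>
      intro σ
      refine ⟨uncurryAlt ((lieA (A := A) 0).flip σ) (fun X v k => k.elim0), fun v => ?_⟩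
      rw [← Fin.cons_self_tail v, koszulD_cons_zero]
      simp [uncurryAlt, lieA_apply]
    | succ n ih =>
      intro σ
      obtain ⟨D, hD⟩ := d_linear_of_key n ih
      refine ⟨uncurryAlt ((lieA (A := A) (n + 1)).flip σ - D.comp σ.curryLeft) ?_, fun v => ?_⟩
      · intro X v k hk
        refine curry_cond _ X ?_ v k hk
        have h2 : (D (σ.curryLeft X)).curryLeft X = lieA n X (σ.curryLeft X) := by
          ext w
          rw [AlternatingMap.curryLeft_apply_apply, hD, lieA_apply]
          cases n with
          | zero => exact koszulD_cons_zero X _ w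
          | succ m =>
            refine (koszulD_cons X _ w).trans ?_
            rw [AlternatingMap.curryLeft_same]
            simp [koszulD]
        have h3 : ∀ a b : Alt A (n + 1), (a - b).curryLeft X = a.curryLeft X - b.curryLeft X :=
          fun a b => rfl
        simp only [LinearMap.sub_apply, LinearMap.flip_apply, LinearMap.comp_apply]
        rw [h3, h2, curry_lieA]
        simp
      · rw [← Fin.cons_self_tail v, koszulD_cons]
        simp [uncurryAlt, lieA_apply, hD]
  exact d_linear_of_key n key

/-- Bundled exterior derivative. -/
noncomputable def dA (A : Type*) [CommRing A] [Algebra ℝ A] (n : ℕ) : Alt A n →ₗ[ℝ] Alt A (n + 1) :=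
  Classical.choose (exists_d n)

lemma dA_apply {n : ℕ} (σ : Alt A n) (v) :
    dA A n σ v = koszulD σ v := Classical.choose_spec (exists_d n) σ v

lemma coe_dA {n : ℕ} (σ : Alt A n) : (⇑(dA A n σ) : Form A (n + 1)) = koszulD σ :=
  funext fun v => dA_apply σ v

lemma curry_dA_zero (X : Derivation ℝ A A) (σ : Alt A 0) :
    (dA A 0 σ).curryLeft X = lieA 0 X σ := by
  ext v
  rw [AlternatingMap.curryLeft_apply_apply, dA_apply, lieA_apply]
  exact koszulD_cons_zero X σ v

lemma curry_dA {n : ℕ} (X : Derivation ℝ A A) (σ : Alt A (n + 1)) :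
    (dA A (n + 1) σ).curryLeft X = lieA (n + 1) X σ - dA A n (σ.curryLeft X) := by
  ext v
  rw [AlternatingMap.curryLeft_apply_apply, dA_apply, AlternatingMap.sub_apply, lieA_apply,
    dA_apply]
  exact koszulD_cons X σ v

lemma curry_sub {n : ℕ} (X : Derivation ℝ A A) (a b : Alt A (n + 1)) :
    (a - b).curryLeft X = a.curryLeft X - b.curryLeft X := rfl

lemma alt_ext {n : ℕ} {a b : Alt A (n + 1)} (h : ∀ X, a.curryLeft X = b.curryLeft X) :
    a = b := by
  ext v
  have := congrArg (fun t => t (Fin.tail v)) (h (v 0))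
  simpa [Matrix.vecCons, Fin.cons_self_tail] using this

lemma lieA_zero_apply (X : Derivation ℝ A A) (σ : Alt A 0) (v) :
    lieA 0 X σ v = X (σ v) := by
  simp [lieA_apply, lieD]

lemma lieA_lie {n : ℕ} (X Y : Derivation ℝ A A) (σ : Alt A n) :
    lieA n ⁅X, Y⁆ σ = lieA n X (lieA n Y σ) - lieA n Y (lieA n X σ) := by
  induction n with
  | zero =>
    ext v
    simp only [AlternatingMap.sub_apply, lieA_zero_apply, Derivation.commutator_apply]
  | succ n ih =>
    refine alt_ext fun Z => ?_
    have hj : ⁅⁅X, Y⁆, Z⁆ = ⁅X, ⁅Y, Z⁆⁆ - ⁅Y, ⁅X, Z⁆⁆ := lie_lie X Y Z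
    simp only [curry_lieA, curry_sub, ih, map_sub, hj]
    abel

lemma lieA_dA {n : ℕ} (X : Derivation ℝ A A) (σ : Alt A n) :
    lieA (n + 1) X (dA A n σ) = dA A n (lieA n X σ) := by
  induction n with
  | zero =>
    refine alt_ext fun Y => ?_
    simp only [curry_lieA, curry_dA_zero, lieA_lie]
    abel
  | succ n ih =>
    refine alt_ext fun Y => ?_
    simp only [curry_lieA, curry_dA, lieA_lie, map_sub, ih]
    abel

lemma dA_dA {n : ℕ} (σ : Alt A n) : dA A (n + 1) (dA A n σ) = 0 := by
  induction n with
  | zero =>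
    refine alt_ext fun Y => ?_
    simp [curry_dA, curry_dA_zero, lieA_dA]
  | succ n ih =>
    refine alt_ext fun Y => ?_
    simp [curry_dA, lieA_dA, ih]

/-- The conjugated differential. -/
noncomputable def dT (T Ti : Derivation ℝ A A →ₗ[ℝ] Derivation ℝ A A) (n : ℕ)
    (σ : Alt A n) : Alt A (n + 1) :=
  (dA A n (σ.compLinearMap Ti)).compLinearMap T

lemma coe_dT (T Ti : Derivation ℝ A A →ₗ[ℝ] Derivation ℝ A A) (n : ℕ) (σ : Alt A n) :
    (⇑(dT T Ti n σ) : Form A (n + 1)) = slotwise T (koszulD (slotwise Ti σ)) := by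
  funext v
  exact dA_apply _ _

lemma dT_add (T Ti : Derivation ℝ A A →ₗ[ℝ] Derivation ℝ A A) (n : ℕ) (σ τ : Alt A n) :
    dT T Ti n (σ + τ) = dT T Ti n σ + dT T Ti n τ := by
  simp [dT]

lemma dT_dT (T Ti : Derivation ℝ A A →ₗ[ℝ] Derivation ℝ A A) (h : ∀ x, T (Ti x) = x)
    (n : ℕ) (σ : Alt A n) :
    dT T Ti (n + 1) (dT T Ti n σ) = 0 := by
  have : ∀ a : Alt A (n + 1), (a.compLinearMap T).compLinearMap Ti = a := by
    intro a
    ext v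
    simp [h]
  unfold dT
  rw [this, dA_dA]
  simp

lemma dT_apply (T Ti : Derivation ℝ A A →ₗ[ℝ] Derivation ℝ A A) (h : ∀ x, Ti (T x) = x)
    (n : ℕ) (σ : Alt A n) (v : Fin (n + 1) → Derivation ℝ A A) :
    dT T Ti n σ v =
  (∑ i : Fin (n + 1), ((-1 : ℤ) ^ (i : ℕ)) • (T (v i)) (σ (v ∘ i.succAbove)))
    + ∑ j : Fin (n + 1), ∑ i : Fin (n + 1),
        if h : (i : ℕ) < (j : ℕ) then
          ((-1 : ℤ) ^ (j : ℕ)) •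
            σ (Function.update (v ∘ j.succAbove)
                ⟨(i : ℕ), lt_of_lt_of_le h (Nat.lt_succ_iff.mp j.isLt)⟩
                (Ti ⁅T (v i), T (v j)⁆))
        else 0 := by
  rw [coe_dT]
  simp only [slotwise, koszulD]
  congr 1
  · refine Finset.sum_congr rfl fun j _ => ?_
    congr 4
    funext k
    simp [h]
  · refine Finset.sum_congr rfl fun j _ => Finset.sum_congr rfl fun i _ => ?_
    split_ifs with hij
    · congr 2
      funext k
      by_cases hk : k = ⟨(i : ℕ), lt_of_lt_of_le hij (Nat.lt_succ_iff.mp j.isLt)⟩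
      · subst hk
        simp
      · simp [Function.update_of_ne hk, h]
    · rfl

lemma dA_eq_dT (n : ℕ) (σ : Alt A n) : dA A n σ = dT LinearMap.id LinearMap.id n σ := by
  simp [dT]

lemma dT_key (R Ri S Si : Derivation ℝ A A →ₗ[ℝ] Derivation ℝ A A)
    (hR : ∀ x, Ri (R x) = x) (hS : ∀ x, Si (S x) = x)
    (h1 : ∀ x, x + R x = (2 : ℝ) • S x)
    (h2 : ∀ X Y, ⁅X, Y⁆ + Ri ⁅R X, R Y⁆ = (2 : ℝ) • Si ⁅S X, S Y⁆)
    (n : ℕ) (σ : Alt A n) :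
    dA A n σ + dT R Ri n σ = dT S Si n σ + dT S Si n σ := by
  ext v
  rw [dA_eq_dT]
  simp only [AlternatingMap.add_apply, dT_apply R Ri hR, dT_apply S Si hS,
    dT_apply LinearMap.id LinearMap.id (fun x => rfl), LinearMap.id_apply]
  have comb : ∀ a b c d e f : A, a + c = e + e → b + d = f + f →
      a + b + (c + d) = e + f + (e + f) := by
    intro a b c d e f h h'
    linear_combination h + h'
  refine comb _ _ _ _ _ _ ?_ ?_
  all_goals simp only [← Finset.sum_add_distrib]
  · refine Finset.sum_congr rfl fun j _ => ?_
    rw [← smul_add, ← smul_add, ← Derivation.add_apply, h1, two_smul, Derivation.add_apply]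
  · refine Finset.sum_congr rfl fun j _ => Finset.sum_congr rfl fun i _ => ?_
    split_ifs with hij
    · rw [← smul_add, ← smul_add, ← AlternatingMap.map_update_add,
        ← AlternatingMap.map_update_add, h2, two_smul]
    · rfl

lemma dT_anticomm (R Ri S Si : Derivation ℝ A A →ₗ[ℝ] Derivation ℝ A A)
    (hR : ∀ x, Ri (R x) = x) (hS : ∀ x, Si (S x) = x)
    (hR' : ∀ x, R (Ri x) = x) (hS' : ∀ x, S (Si x) = x)
    (h1 : ∀ x, x + R x = (2 : ℝ) • S x)
    (h2 : ∀ X Y, ⁅X, Y⁆ + Ri ⁅R X, R Y⁆ = (2 : ℝ) • Si ⁅S X, S Y⁆)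
    (n : ℕ) (σ : Alt A n) :
    dA A (n + 1) (dT R Ri n σ) + dT R Ri (n + 1) (dA A n σ) = 0 := by
  have k1 := dT_key R Ri S Si hR hS h1 h2 n σ
  have k2 := dT_key R Ri S Si hR hS h1 h2 (n + 1) (dA A n σ + dT R Ri n σ)
  nth_rewrite 3 4 [k1] at k2
  simpa [dT_add, dT_dT _ _ hR', dT_dT _ _ hS', dA_dA] using k2

lemma bracket_key (Φ : Derivation ℝ A A →ₗ[ℝ] Derivation ℝ A A)
    (hΦ : ∀ x, Φ (Φ x) = Φ x)
    (hz : ∀ X Y, Φ ⁅Φ X, Φ Y⁆ = ⁅Φ X, Φ Y⁆)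
    (hx : ∀ X Y, Φ ⁅X - Φ X, Y - Φ Y⁆ = 0)
    (X Y : Derivation ℝ A A) :
    ⁅X, Y⁆ + (⁅X + Φ X, Y + Φ Y⁆ - (1 / 2 : ℝ) • Φ ⁅X + Φ X, Y + Φ Y⁆) =
      (2 : ℝ) • (⁅X + (1 / 2 : ℝ) • Φ X, Y + (1 / 2 : ℝ) • Φ Y⁆
        - (1 / 3 : ℝ) • Φ ⁅X + (1 / 2 : ℝ) • Φ X, Y + (1 / 2 : ℝ) • Φ Y⁆) := by
  have hN := hx X Y
  simp only [lie_sub, sub_lie, map_sub, hz] at hN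
  simp only [lie_add, add_lie, map_add, hz, lie_smul, smul_lie, map_smul]
  linear_combination (norm := module) (1 / 6 : ℝ) • hN

/-- Bundling of the forms in the statement. -/
def toAlt {p : ℕ} (σ : Form A p)
    (hmul : ∀ (u : Fin p → Derivation ℝ A A) (k : Fin p) (a : A)
        (x y : Derivation ℝ A A),
      σ (Function.update u k (a • x + y)) =
        a * σ (Function.update u k x) + σ (Function.update u k y))
    (halt : ∀ (u : Fin p → Derivation ℝ A A) (k l : Fin p),
      k ≠ l → u k = u l → σ u = 0) : Alt A p where
  toFun := σ
  map_update_add' := by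
    intro inst m i x y
    rw [Subsingleton.elim inst (instDecidableEqFin _)]
    simpa using hmul m i 1 x y
  map_update_smul' := by
    intro inst m i c x
    rw [Subsingleton.elim inst (instDecidableEqFin _)]
    have h0 : σ (@Function.update _ _ (instDecidableEqFin _) m i 0) = 0 := by simpa using hmul m i 1 0 0
    have h := hmul m i (algebraMap ℝ A c) x 0
    rw [h0, add_zero, add_zero, algebraMap_smul] at h
    rw [h, Algebra.smul_def]
  map_eq_zero_of_eq' := fun u k l h hkl => halt u k l hkl h

/-- Let `Φ ∈ End(TM)` with `R_Φ = Id + Φ` invertible (with inverse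
`Ψi`), `Φ` the projection onto `ζ` along `ξ` for a decomposition `TM = ξ ⊕ ζ`
with both `ξ` and `ζ` integrable. Then the deformed differential
`d_Φ = R_Φ ∘ d ∘ R_Φ⁻¹` (with `R_Φ` acting slotwise on forms) anticommutes with
`d`: `[d, d_Φ] = d d_Φ + d_Φ d = 0` on every (A-multilinear alternating) form. -/
theorem deformed_differential_anticommutes_with_d
    (Φ Ψi : Module.End A (Derivation ℝ A A))
    (hinv₁ : ∀ x, Ψi (x + Φ x) = x)
    (hinv₂ : ∀ x, Ψi x + Φ (Ψi x) = x)
    (ξ ζ : Submodule A (Derivation ℝ A A)) (hcompl : IsCompl ξ ζ)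
    (hΦξ : ∀ x ∈ ξ, Φ x = 0) (hΦζ : ∀ x ∈ ζ, Φ x = x)
    (hξ : ∀ X ∈ ξ, ∀ Y ∈ ξ, ⁅X, Y⁆ ∈ ξ)
    (hζ : ∀ X ∈ ζ, ∀ Y ∈ ζ, ⁅X, Y⁆ ∈ ζ)
    (p : ℕ) (σ : Form A p)
    (hmul : ∀ (u : Fin p → Derivation ℝ A A) (k : Fin p) (a : A)
        (x y : Derivation ℝ A A),
      σ (Function.update u k (a • x + y)) =
        a * σ (Function.update u k x) + σ (Function.update u k y))
    (halt : ∀ (u : Fin p → Derivation ℝ A A) (k l : Fin p),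
      k ≠ l → u k = u l → σ u = 0)
    (v : Fin (p + 2) → Derivation ℝ A A) :
    koszulD (slotwise (fun x => x + Φ x) (koszulD (slotwise (fun x => Ψi x) σ))) v
      + slotwise (fun x => x + Φ x)
          (koszulD (slotwise (fun x => Ψi x) (koszulD σ))) v = 0 := by
  have hΦmem : ∀ x, Φ x ∈ ζ ∧ x - Φ x ∈ ξ := by
    intro x
    obtain ⟨a, ha, b, hb, rfl⟩ := Submodule.mem_sup.1
      (show x ∈ ξ ⊔ ζ by rw [hcompl.sup_eq_top]; trivial)
    rw [map_add, hΦξ a ha, hΦζ b hb]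
    simpa using ⟨hb, ha⟩
  let F : Derivation ℝ A A →ₗ[ℝ] Derivation ℝ A A := Φ.restrictScalars ℝ
  have hF : ∀ x, F x = Φ x := fun x => rfl
  have hFF : ∀ x, F (F x) = F x := fun x => hΦζ _ (hΦmem x).1
  have hz : ∀ X Y, F ⁅F X, F Y⁆ = ⁅F X, F Y⁆ := fun X Y =>
    hΦζ _ (hζ _ (hΦmem X).1 _ (hΦmem Y).1)
  have hx : ∀ X Y, F ⁅X - F X, Y - F Y⁆ = 0 := fun X Y =>
    hΦξ _ (hξ _ (hΦmem X).2 _ (hΦmem Y).2)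
  have hΨ : ∀ x, Ψi x = x - (1 / 2 : ℝ) • F x := by
    intro x
    have h := hinv₁ (x - (1 / 2 : ℝ) • F x)
    rw [← h, ← hF]
    congr 1
    simp only [map_sub, map_smul, hFF]
    module
  let R := LinearMap.id + F
  let Ri := LinearMap.id - (1 / 2 : ℝ) • F
  let S := LinearMap.id + (1 / 2 : ℝ) • F
  let Si := LinearMap.id - (1 / 3 : ℝ) • F
  have key := dT_anticomm R Ri S Si
    (fun x => by simp [R, Ri, hFF]; module)
    (fun x => by simp [S, Si, hFF]; module)
    (fun x => by simp [R, Ri, hFF]; module)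
    (fun x => by simp [S, Si, hFF]; module)
    (fun x => by simp [R, S]; module)
    (fun X Y => bracket_key F hFF hz hx X Y) p (toAlt σ hmul halt)
  have key := congrArg (fun t => t v) key
  simp only [AlternatingMap.add_apply, AlternatingMap.zero_apply] at key
  rw [dA_apply, coe_dT, coe_dT, coe_dA] at key
  have e1 : (⇑R) = fun x => x + Φ x := rfl
  have e2 : (⇑Ri) = fun x => Ψi x := funext fun x => (hΨ x).symm
  rw [e1, e2] at key
  exact key

end Stmt19
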